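/- Let r ∈ ℕ and let 𝒞 be a hereditary class of finite simple graphs such that every graph in 𝒞 is an r-bounded perturbation of some interval graph. Then 𝒞 has bounded twin-width if and only if there exist p ≥ 1 and a permutation π of {1,…,p} such that no graph in 𝒞 exposes π. -/

import Mathlib

open Finset

def IsHomog {V : Type} (G : SimpleGraph V) (A B : Finset V) : Prop :=
  (∀ a ∈ A, ∀ b ∈ B, G.Adj a b) ∨ (∀ a ∈ A, ∀ b ∈ B, ¬ G.Adj a b)

noncomputable def redDegree {V : Type} [Fintype V] [DecidableEq V] (G : SimpleGraph V)
    (P : Finpartition (univ : Finset V)) (A : Finset V) : ℕ :=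
  letI := Classical.decPred fun B : Finset V => ¬ IsHomog G A B
  ((P.parts.erase A).filter fun B => ¬ IsHomog G A B).card

def IsMerge {V : Type} [Fintype V] [DecidableEq V]
    (P Q : Finpartition (univ : Finset V)) : Prop :=
  ∃ A ∈ P.parts, ∃ B ∈ P.parts, A ≠ B ∧
    Q.parts = insert (A ∪ B) ((P.parts.erase A).erase B)

def TwinWidthLE {V : Type} [Fintype V] [DecidableEq V] (G : SimpleGraph V) (d : ℕ) : Prop :=
  ∃ L : List (Finpartition (univ : Finset V)),
    (∃ P₀, L.head? = some P₀ ∧ ∀ A ∈ P₀.parts, A.card = 1) ∧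
    (∃ P₁, L.getLast? = some P₁ ∧ P₁.parts.card ≤ 1) ∧
    List.Chain' IsMerge L ∧
    ∀ P ∈ L, ∀ A ∈ P.parts, redDegree G P A ≤ d

/-- `G` is an interval graph: vertices carry closed rational intervals, and
distinct vertices are adjacent iff their intervals intersect. -/
def IsIntervalGraph {n : ℕ} (G : SimpleGraph (Fin n)) : Prop :=
  ∃ l r : Fin n → ℚ, (∀ v, l v ≤ r v) ∧
    ∀ u v : Fin n, u ≠ v →
      (G.Adj u v ↔ max (l u) (l v) ≤ min (r u) (r v))

/-- The graph `H` exposes the permutation `π` of `{0, …, p-1}`: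
its vertex set partitions into `W = range w`, `W₁ = range w₁`, `W₂ = range w₂`
(each of size `p`) such that the neighborhoods of the `w i` in `W₁` are
nonempty and strictly increasing along `i`, and the neighborhoods in `W₂` are
nonempty and strictly increasing along `π`. -/
def Exposes {V : Type} {p : ℕ} (H : SimpleGraph V) (π : Equiv.Perm (Fin p)) : Prop :=
  ∃ w w₁ w₂ : Fin p → V,
    Function.Injective w ∧ Function.Injective w₁ ∧ Function.Injective w₂ ∧
    Disjoint (Set.range w) (Set.range w₁) ∧
    Disjoint (Set.range w) (Set.range w₂) ∧
    Disjoint (Set.range w₁) (Set.range w₂) ∧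
    Set.range w ∪ Set.range w₁ ∪ Set.range w₂ = Set.univ ∧
    (∀ i, (H.neighborSet (w i) ∩ Set.range w₁).Nonempty) ∧
    (∀ i, (H.neighborSet (w i) ∩ Set.range w₂).Nonempty) ∧
    (∀ i j : Fin p, i < j →
      H.neighborSet (w i) ∩ Set.range w₁ ⊂ H.neighborSet (w j) ∩ Set.range w₁) ∧
    (∀ i j : Fin p, i < j →
      H.neighborSet (w (π i)) ∩ Set.range w₂ ⊂ H.neighborSet (w (π j)) ∩ Set.range w₂)

def IsInducedSubgraphOf {m n : ℕ} (H : SimpleGraph (Fin m)) (G : SimpleGraph (Fin n)) : Prop :=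
  ∃ f : Fin m ↪ Fin n, ∀ u v, H.Adj u v ↔ G.Adj (f u) (f v)

def Hereditary (C : ∀ n : ℕ, Set (SimpleGraph (Fin n))) : Prop :=
  ∀ (m n : ℕ) (H : SimpleGraph (Fin m)) (G : SimpleGraph (Fin n)),
    G ∈ C n → IsInducedSubgraphOf H G → H ∈ C m

/-- The elementary perturbation of `G` on the vertex subset `X`: the adjacency
relation is complemented on all pairs of distinct vertices of `X`. -/
def ElemPerturb {V : Type} (G : SimpleGraph V) (X : Set V) : SimpleGraph V where
  Adj u v := u ≠ v ∧ Xor' (G.Adj u v) (u ∈ X ∧ v ∈ X)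
  symm := by
    refine ⟨?_⟩
    intro u v h
    refine ⟨Ne.symm h.1, ?_⟩
    rcases h.2 with ⟨h1, h2⟩ | ⟨h1, h2⟩
    · exact Or.inl ⟨h1.symm, fun c => h2 ⟨c.2, c.1⟩⟩
    · exact Or.inr ⟨⟨h1.2, h1.1⟩, fun c => h2 c.symm⟩
  loopless := ⟨fun v h => h.1 rfl⟩

/-- `G` is obtained from `G₀` by a sequence of at most `r` elementary
perturbations. -/
def BoundedPerturbOf {V : Type} (r : ℕ) (G₀ G : SimpleGraph V) : Prop :=
  ∃ L : List (Set V), L.length ≤ r ∧ G = L.foldl ElemPerturb G₀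

/-!
Exposing the transpose of a large grid yields vertices `w x y` and two half-graphs, one reading off
the row `x` and the other the column `y`. In a contraction sequence of small width neither
half-graph can be the first to have two of its vertices merged, so the twin-width is large.

Conversely, a bounded perturbation of an interval graph is an interval graph whose adjacencies are
complemented between some pairs of colour classes, with boundedly many colours. For each colour,
plot the points (left endpoint, right endpoint). If these contain a large grid, then it crosses the
endpoints of other intervals so freely that every short permutation is exposed. Otherwise the
Marcus–Tardos theorem bounds the number of nonempty cells of every division of the endpoints into
consecutive groups linearly in the number of groups, so two consecutive groups with few cells can
always be merged, and this contracts the graph with bounded red degree.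
-/

/-! ### Grids and the Marcus–Tardos theorem -/

section Grid

variable {α β γ δ : Type*} {k : ℕ}

/-- A `k`-grid of points: for `i < i'` every point of row `i` precedes every point of row `i'` in
the first coordinate, and for `j < j'` every point of column `j` precedes every point of column
`j'` in the second coordinate. -/
def IsGrid [LT α] [LT β] (P : Fin k → Fin k → α × β) : Prop :=
  (∀ i i' j j', i < i' → (P i j).1 < (P i' j').1) ∧
    ∀ i i' j j', j < j' → (P i j).2 < (P i' j').2

/-- The point set `E` contains a `k`-grid. Seeing `E` as a 0-1 matrix, this is a `k`-by-`k`
division of the matrix with a nonzero entry in every cell. -/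
def HasGrid [LT α] [LT β] (E : Finset (α × β)) (k : ℕ) : Prop :=
  ∃ P : Fin k → Fin k → α × β, IsGrid P ∧ ∀ i j, P i j ∈ E

lemma IsGrid.fst_le_fst_iff [Preorder α] [LT β] {P : Fin k → Fin k → α × β} (hP : IsGrid P)
    {i i' : Fin k} (hne : i ≠ i') (j j' : Fin k) : (P i j).1 ≤ (P i' j').1 ↔ i ≤ i' := by
  rcases lt_or_gt_of_ne hne with hlt | hgt
  · exact iff_of_true (hP.1 _ _ _ _ hlt).le hlt.le
  · exact iff_of_false (hP.1 _ _ _ _ hgt).not_ge hgt.not_ge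

lemma IsGrid.snd_le_snd_iff [LT α] [Preorder β] {P : Fin k → Fin k → α × β} (hP : IsGrid P)
    {j j' : Fin k} (hne : j ≠ j') (i i' : Fin k) : (P i j).2 ≤ (P i' j').2 ↔ j ≤ j' := by
  rcases lt_or_gt_of_ne hne with hlt | hgt
  · exact iff_of_true (hP.2 _ _ _ _ hlt).le hlt.le
  · exact iff_of_false (hP.2 _ _ _ _ hgt).not_ge hgt.not_ge

lemma HasGrid.of_image_swap [LT α] [LT β] [DecidableEq α] [DecidableEq β] {E : Finset (α × β)}
    (h : HasGrid (E.image Prod.swap) k) : HasGrid E k := by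
  obtain ⟨P, hP, hPE⟩ := h
  refine ⟨fun i j => (P j i).swap, ⟨fun i i' j j' => hP.2 j j' i i',
    fun i i' j j' => hP.1 j j' i i'⟩, fun i j => ?_⟩
  obtain ⟨x, hx, hxP⟩ := mem_image.1 (hPE j i)
  simpa only [← hxP, Prod.swap_swap] using hx

lemma HasGrid.of_image_map [LinearOrder α] [LinearOrder β] [LinearOrder γ] [LinearOrder δ]
    {E : Finset (α × β)} {f : α → γ} {g : β → δ} (hf : Monotone f) (hg : Monotone g)
    (h : HasGrid (E.image (Prod.map f g)) k) : HasGrid E k := by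
  obtain ⟨P, hP, hPE⟩ := h
  choose Q hQE hQP using fun i j => mem_image.1 (hPE i j)
  simp only [Prod.ext_iff, Prod.map_fst, Prod.map_snd] at hQP
  refine ⟨Q, ⟨fun i i' j j' hi => hf.reflect_lt ?_, fun i i' j j' hj => hg.reflect_lt ?_⟩, hQE⟩
  · rw [(hQP i j).1, (hQP i' j').1]
    exact hP.1 _ _ _ _ hi
  · rw [(hQP i j).2, (hQP i' j').2]
    exact hP.2 _ _ _ _ hj

end Grid

section MarcusTardos

variable {E s : Finset (ℕ × ℕ)} {k n q : ℕ}

/-- The index of the `q`-by-`q` block of `ℕ × ℕ` that contains a point, used to shrink a point set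
in the induction proving the Marcus–Tardos theorem. -/
def block (q : ℕ) : ℕ × ℕ → ℕ × ℕ := Prod.map (· / q) (· / q)

/-- The first coordinates of the points of `E` in the block `B`. -/
def blockCols (E : Finset (ℕ × ℕ)) (q : ℕ) (B : ℕ × ℕ) : Finset ℕ :=
  {x ∈ E | block q x = B}.image Prod.fst

/-- The second coordinates of the points of `E` in the block `B`. -/
def blockRows (E : Finset (ℕ × ℕ)) (q : ℕ) (B : ℕ × ℕ) : Finset ℕ :=
  {x ∈ E | block q x = B}.image Prod.snd

lemma mem_blockCols {B : ℕ × ℕ} {x : ℕ} :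
    x ∈ blockCols E q B ↔ ∃ y, (x, y) ∈ E ∧ x / q = B.1 ∧ y / q = B.2 := by
  simp [blockCols, block, Prod.ext_iff]

lemma blockRows_eq_blockCols_image_swap (E : Finset (ℕ × ℕ)) (q : ℕ) (B : ℕ × ℕ) :
    blockRows E q B = blockCols (E.image Prod.swap) q B.swap := by
  ext y
  simp [blockRows, mem_blockCols, block, Prod.ext_iff, and_comm]

lemma blockCols_subset_Ico (hq : 0 < q) (B : ℕ × ℕ) :
    blockCols E q B ⊆ Ico (B.1 * q) (B.1 * q + q) := by
  intro x hx
  obtain ⟨y, -, hxB, -⟩ := mem_blockCols.1 hx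
  rw [mem_Ico, ← Nat.succ_mul, ← Nat.le_div_iff_mul_le hq, ← Nat.div_lt_iff_lt_mul hq, hxB]
  exact ⟨le_rfl, Nat.lt_succ_self _⟩

lemma card_blockCols_le (hq : 0 < q) (B : ℕ × ℕ) : #(blockCols E q B) ≤ q := by
  simpa using card_le_card (blockCols_subset_Ico (E := E) hq B)

lemma card_blockRows_le (hq : 0 < q) (B : ℕ × ℕ) : #(blockRows E q B) ≤ q := by
  rw [blockRows_eq_blockCols_image_swap]
  exact card_blockCols_le hq _

lemma hasGrid_of_subset_blockCols {S T : Finset ℕ} {I : ℕ} (hS : k ≤ #S) (hT : k ≤ #T)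
    (h : ∀ J ∈ T, S ⊆ blockCols E q (I, J)) : HasGrid E k := by
  have hpoint (i j : Fin k) :
      ∃ y, (S.orderEmbOfCardLe hS i, y) ∈ E ∧ y / q = T.orderEmbOfCardLe hT j := by
    obtain ⟨y, hyE, -, hy⟩ := mem_blockCols.1
      (h _ (orderEmbOfCardLe_mem T hT j) (orderEmbOfCardLe_mem S hS i))
    exact ⟨y, hyE, hy⟩
  choose y hyE hy using hpoint
  refine ⟨fun i j => (S.orderEmbOfCardLe hS i, y i j), ⟨fun i i' j j' hi => by simpa, ?_⟩, hyE⟩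
  intro i i' j j' hj
  refine Nat.lt_of_div_lt_div (c := q) ?_
  simpa only [hy, OrderEmbedding.lt_iff_lt]

-- Blocks of a strip with the same large set of columns form a grid, and a strip offers only `2 ^ q`
-- sets of columns.
lemma card_wide_blocks_le (hE : ¬ HasGrid E k) (hq : 0 < q) (hs : ∀ B ∈ s, B.1 < n) :
    #{B ∈ s | k ≤ #(blockCols E q B)} ≤ 2 ^ q * k * n := by
  set wide : Finset (ℕ × ℕ) := {B ∈ s | k ≤ #(blockCols E q B)}
  have hstrip (I : ℕ) : #{B ∈ wide | B.1 = I} ≤ 2 ^ q * k := by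
    by_contra! hlt
    have hmaps : ∀ B ∈ ({B ∈ wide | B.1 = I} : Finset _),
        blockCols E q B ∈ (Ico (I * q) (I * q + q)).powerset := by
      intro B hB
      rw [mem_powerset, ← (mem_filter.1 hB).2]
      exact blockCols_subset_Ico hq B
    obtain ⟨S, -, hcard⟩ := exists_lt_card_fiber_of_mul_lt_card_of_maps_to hmaps (by simpa)
    set fiber : Finset (ℕ × ℕ) := {B ∈ ({B ∈ wide | B.1 = I} : Finset _) | blockCols E q B = S}
    have hfiber {B : ℕ × ℕ} (hB : B ∈ fiber) :
        k ≤ #(blockCols E q B) ∧ B.1 = I ∧ blockCols E q B = S := by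
      simp only [fiber, wide, mem_filter] at hB
      exact ⟨hB.1.1.2, hB.1.2, hB.2⟩
    obtain ⟨B, hB⟩ : fiber.Nonempty := card_pos.1 (by lia)
    refine hE (hasGrid_of_subset_blockCols (q := q) (S := S)
      (T := fiber.image Prod.snd) (I := I) ?_ ?_ ?_)
    · exact (hfiber hB).2.2 ▸ (hfiber hB).1
    · rw [card_image_of_injOn]
      · exact hcard.le
      · exact fun B hB B' hB' h =>
          Prod.ext ((hfiber hB).2.1.trans (hfiber hB').2.1.symm) h
    · intro J hJ
      obtain ⟨B, hB, rfl⟩ := mem_image.1 hJ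
      obtain ⟨-, rfl, rfl⟩ := hfiber hB
      rfl
  have himage : wide.image Prod.fst ⊆ range n := by
    simp only [image_subset_iff, mem_range]
    exact fun B hB => hs B (mem_filter.1 hB).1
  calc #wide ≤ 2 ^ q * k * #(wide.image Prod.fst) :=
        card_le_mul_card_image _ _ fun I _ => hstrip I
    _ ≤ 2 ^ q * k * n := by
        gcongr
        simpa using card_le_card himage

lemma card_tall_blocks_le (hE : ¬ HasGrid E k) (hq : 0 < q) (hs : ∀ B ∈ s, B.2 < n) :
    #{B ∈ s | k ≤ #(blockRows E q B)} ≤ 2 ^ q * k * n := by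
  rw [← card_image_of_injective _ Prod.swap_injective]
  refine (card_le_card ?_).trans (card_wide_blocks_le (E := E.image Prod.swap)
    (s := s.image Prod.swap) (fun h => hE h.of_image_swap) hq
    (forall_mem_image.2 hs))
  simp only [image_subset_iff, mem_filter, blockRows_eq_blockCols_image_swap]
  exact fun B hB => ⟨mem_image_of_mem _ hB.1, hB.2⟩

lemma card_block_le (hq : 0 < q) (B : ℕ × ℕ) :
    #{x ∈ E | block q x = B} ≤ k * k + (if k ≤ #(blockCols E q B) then q * q else 0) +
      (if k ≤ #(blockRows E q B) then q * q else 0) := by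
  have hprod : #{x ∈ E | block q x = B} ≤ #(blockCols E q B) * #(blockRows E q B) := by
    rw [← card_product]
    exact card_le_card fun x hx =>
      mem_product.2 ⟨mem_image_of_mem _ hx, mem_image_of_mem _ hx⟩
  have hqq : #(blockCols E q B) * #(blockRows E q B) ≤ q * q :=
    Nat.mul_le_mul (card_blockCols_le hq B) (card_blockRows_le hq B)
  split_ifs with hcols hrows
  · lia
  · lia
  · lia
  · exact hprod.trans (Nat.mul_le_mul (by lia) (by lia))

lemma card_le_card_image_block (hE : ¬ HasGrid E k) (hq : 0 < q)
    (hn : ∀ x ∈ E, x.1 / q < n ∧ x.2 / q < n) :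
    #E ≤ k * k * #(E.image (block q)) + 2 * (q * q * (2 ^ q * k * n)) := by
  have hblocks : ∀ B ∈ E.image (block q), B.1 < n ∧ B.2 < n :=
    forall_mem_image.2 hn
  have hwide := card_wide_blocks_le hE hq fun B hB => (hblocks B hB).1
  have htall := card_tall_blocks_le hE hq fun B hB => (hblocks B hB).2
  calc #E = ∑ B ∈ E.image (block q), #{x ∈ E | block q x = B} :=
        card_eq_sum_card_image _ _
    _ ≤ ∑ B ∈ E.image (block q), (k * k + (if k ≤ #(blockCols E q B) then q * q else 0) +
          (if k ≤ #(blockRows E q B) then q * q else 0)) :=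
        sum_le_sum fun B _ => card_block_le hq B
    _ = k * k * #(E.image (block q)) +
          q * q * #{B ∈ E.image (block q) | k ≤ #(blockCols E q B)} +
          q * q * #{B ∈ E.image (block q) | k ≤ #(blockRows E q B)} := by
        simp only [sum_add_distrib, ← sum_filter, sum_const, smul_eq_mul, mul_comm]
    _ ≤ k * k * #(E.image (block q)) + q * q * (2 ^ q * k * n) + q * q * (2 ^ q * k * n) := by
        gcongr
    _ = _ := by ring

lemma card_le_of_lt_pow (hq : q = k * k + 2) (t : ℕ) (hE : ¬ HasGrid E k)
    (hlt : ∀ x ∈ E, x.1 < q ^ t ∧ x.2 < q ^ t) :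
    #E ≤ (2 * (q * q * (2 ^ q * k)) + 1) * q ^ t := by
  set D := q * q * (2 ^ q * k) with hD
  have hq₀ : 0 < q := by lia
  induction t generalizing E with
  | zero =>
    have hsub : E ⊆ {(0, 0)} := by
      intro x hx
      simpa [Prod.ext_iff] using hlt x hx
    simpa using (card_le_card hsub).trans (by simp)
  | succ t ih =>
    have hdiv : ∀ x ∈ E, x.1 / q < q ^ t ∧ x.2 / q < q ^ t := by
      simpa only [Nat.div_lt_iff_lt_mul hq₀, ← pow_succ] using hlt
    have hmono : Monotone (· / q) := fun _ _ h => Nat.div_le_div_right h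
    have himage : #(E.image (block q)) ≤ (2 * D + 1) * q ^ t :=
      ih (fun h => hE (h.of_image_map hmono hmono)) (forall_mem_image.2 hdiv)
    calc #E ≤ k * k * #(E.image (block q)) + 2 * (q * q * (2 ^ q * k * q ^ t)) :=
          card_le_card_image_block hE hq₀ hdiv
      _ ≤ k * k * ((2 * D + 1) * q ^ t) + 2 * (D * q ^ t) := by
          rw [hD, ← mul_assoc (q * q)]
          gcongr
      _ ≤ (k * k + 2) * ((2 * D + 1) * q ^ t) := by
          nlinarith [Nat.zero_le (q ^ t), Nat.zero_le (D * q ^ t)]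
      _ = (2 * D + 1) * q ^ (t + 1) := by
          rw [← hq]
          ring

theorem marcus_tardos (k : ℕ) : ∃ C : ℕ, ∀ (n : ℕ) (E : Finset (ℕ × ℕ)),
    (∀ x ∈ E, x.1 < n ∧ x.2 < n) → ¬ HasGrid E k → #E ≤ C * n := by
  obtain ⟨q, hq⟩ : ∃ q, q = k * k + 2 := ⟨_, rfl⟩
  refine ⟨(2 * (q * q * (2 ^ q * k)) + 1) * q, fun n E hE hgrid => ?_⟩
  rcases eq_or_ne n 0 with rfl | hn
  · rw [eq_empty_of_forall_notMem fun x hx => (hE x hx).1.not_ge (Nat.zero_le _)]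
    simp
  have hlog : n < q ^ (Nat.log q n + 1) := Nat.lt_pow_succ_log_self (by lia) n
  calc #E ≤ (2 * (q * q * (2 ^ q * k)) + 1) * q ^ (Nat.log q n + 1) :=
        card_le_of_lt_pow hq _ hgrid fun x hx => ⟨(hE x hx).1.trans hlog, (hE x hx).2.trans hlog⟩
    _ = (2 * (q * q * (2 ^ q * k)) + 1) * q * q ^ Nat.log q n := by ring
    _ ≤ (2 * (q * q * (2 ^ q * k)) + 1) * q * n := by
        gcongr
        exact Nat.pow_log_le_self q hn

end MarcusTardos

/-! ### Contraction sequences as chains of partitions -/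

lemma not_isHomog {V : Type} {G : SimpleGraph V} {A B : Finset V} {a a' b b' : V} (ha : a ∈ A)
    (hb : b ∈ B) (ha' : a' ∈ A) (hb' : b' ∈ B) (hadj : G.Adj a b) (hnadj : ¬ G.Adj a' b') :
    ¬ IsHomog G A B := by
  rintro (hall | hnone)
  · exact hnadj (hall a' ha' b' hb')
  · exact hnone a ha b hb hadj

section MergeStep

variable {V : Type} [Fintype V] [DecidableEq V] {G : SimpleGraph V} {d : ℕ}
  {P Q : Finpartition (univ : Finset V)} {A : Finset V}

lemma card_le_redDegree {S : Finset (Finset V)} (hS : S ⊆ P.parts.erase A)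
    (hhom : ∀ B ∈ S, ¬ IsHomog G A B) : #S ≤ redDegree G P A := by
  refine card_le_card fun B hB => ?_
  simp only [mem_filter]
  exact ⟨hS hB, hhom B hB⟩

/-- One step of a contraction sequence: merging two parts of `P` gives `Q`, all of whose parts have
red degree at most `d`. -/
def MergeStep (G : SimpleGraph V) (d : ℕ) (P Q : Finpartition (univ : Finset V)) : Prop :=
  IsMerge P Q ∧ ∀ A ∈ Q.parts, redDegree G Q A ≤ d

lemma redDegree_eq_zero (hP : ∀ A ∈ P.parts, #A = 1) (hA : A ∈ P.parts) :
    redDegree G P A = 0 := by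
  refine card_eq_zero.2 (eq_empty_of_forall_notMem fun B hB => ?_)
  simp only [mem_filter] at hB
  obtain ⟨u, rfl⟩ := card_eq_one.1 (hP A hA)
  obtain ⟨v, rfl⟩ := card_eq_one.1 (hP B (mem_of_mem_erase hB.1))
  simpa [IsHomog, not_or] using hB.2

lemma twinWidthLE_iff_reflTransGen : TwinWidthLE G d ↔
    ∃ P Q : Finpartition (univ : Finset V), (∀ A ∈ P.parts, #A = 1) ∧ #Q.parts ≤ 1 ∧
      Relation.ReflTransGen (MergeStep G d) P Q := by
  constructor
  · rintro ⟨L, ⟨P, hP, hP₁⟩, ⟨Q, hQ, hQ₁⟩, hchain, hred⟩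
    obtain ⟨L, rfl⟩ := List.head?_eq_some_iff.1 hP
    obtain ⟨_, rfl⟩ := List.mem_getLast?_eq_getLast hQ
    refine ⟨P, _, hP₁, hQ₁,
      List.relationReflTransGen_of_exists_isChain_cons L ?_ rfl⟩
    exact List.IsChain.imp_of_mem_imp (fun _ R _ hR hm => ⟨hm, hred R hR⟩) hchain
  · rintro ⟨P, Q, hP₁, hQ₁, hPQ⟩
    obtain ⟨L, hchain, hlast⟩ := List.exists_isChain_cons_of_relationReflTransGen hPQ
    refine ⟨P :: L, ⟨P, rfl, hP₁⟩, ⟨Q, ?_, hQ₁⟩, hchain.imp fun _ _ h => h.1, ?_⟩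
    · rw [List.getLast?_eq_getLast_of_ne_nil (List.cons_ne_nil _ _), hlast]
    · have hP (A) (hA : A ∈ P.parts) : redDegree G P A ≤ d :=
        (redDegree_eq_zero hP₁ hA).trans_le d.zero_le
      rw [List.forall_mem_cons]
      exact ⟨hP, hchain.cons_induction (fun R => ∀ A ∈ R.parts, redDegree G R A ≤ d) L
        (fun _ _ h _ => h.2) hP⟩

end MergeStep

/-! ### Exposing the grid permutation forces large twin-width -/

lemma injective_of_adj_iff_le {V ι : Type*} {G : SimpleGraph V} [PartialOrder ι] {u f : ι → V}
    (h : ∀ i j, G.Adj (u i) (f j) ↔ j ≤ i) : Function.Injective f := by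
  intro i j hij
  refine le_antisymm ((h j i).1 ?_) ((h i j).1 ?_)
  · rw [hij]
    exact (h j j).2 le_rfl
  · rw [← hij]
    exact (h i i).2 le_rfl

section LowerBound

variable {V : Type} [Fintype V] [DecidableEq V] {G : SimpleGraph V} {t : ℕ}
  {P Q : Finpartition (univ : Finset V)} {A : Finset V} {ι : Type*}

lemma part_injective_of_card_eq_one (hP : ∀ A ∈ P.parts, #A = 1) : Function.Injective P.part := by
  intro u v huv
  refine card_le_one.1 (hP _ (P.part_mem.2 (mem_univ u))).le u ?_ v ?_
  · exact P.mem_part (mem_univ u)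
  · rw [huv]
    exact P.mem_part (mem_univ v)

lemma card_image_part_le {s : Finset ι} {f : ι → V} (hA : redDegree G Q A ≤ t)
    (hsplit : ∀ i ∈ s, ∃ a ∈ A, ∃ a' ∈ A, G.Adj a (f i) ∧ ¬ G.Adj a' (f i)) :
    #(s.image fun i => Q.part (f i)) ≤ t + 1 := by
  set S : Finset (Finset V) := s.image fun i => Q.part (f i)
  have hparts : S ⊆ Q.parts := image_subset_iff.2 fun i _ => Q.part_mem.2 (mem_univ (f i))
  have hhom : ∀ B ∈ S, ¬ IsHomog G A B := by
    refine forall_mem_image.2 fun i hi => ?_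
    obtain ⟨a, ha, a', ha', hadj, hnadj⟩ := hsplit i hi
    have hfi : f i ∈ Q.part (f i) := Q.mem_part (mem_univ _)
    exact not_isHomog ha hfi ha' hfi hadj hnadj
  calc #S ≤ #(S.erase A) + 1 := by
        have := pred_card_le_card_erase (s := S) (a := A)
        lia
    _ ≤ redDegree G Q A + 1 := by
        gcongr
        exact card_le_redDegree (erase_subset_erase A hparts)
          fun B hB => hhom B (mem_of_mem_erase hB)
    _ ≤ t + 1 := by gcongr

lemma IsMerge.card_fiber_le_two {f : ι → V} (hm : IsMerge P Q)
    (hf : Function.Injective fun i => P.part (f i)) (hA : A ∈ Q.parts) (s : Finset ι) :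
    #{i ∈ s | f i ∈ A} ≤ 2 := by
  classical
  have hone : ∀ D ∈ P.parts, #{i ∈ s | f i ∈ D} ≤ 1 := by
    intro D hD
    simp only [card_le_one, mem_filter]
    exact fun i ⟨_, hi⟩ j ⟨_, hj⟩ =>
      hf ((P.part_eq_of_mem hD hi).trans (P.part_eq_of_mem hD hj).symm)
  obtain ⟨B, hB, C, hC, -, hQ⟩ := hm
  rw [hQ, mem_insert] at hA
  rcases hA with rfl | hA
  · simp only [mem_union, filter_or]
    exact (card_union_le _ _).trans (Nat.add_le_add (hone B hB) (hone C hC))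
  · exact (hone A (mem_of_mem_erase (mem_of_mem_erase hA))).trans one_le_two

variable [LinearOrder ι]

-- If `u y`, `y ∈ Y`, share a part, then that part splits every `f y` but the first one.
lemma IsMerge.card_le_of_half_graph {u f : ι → V} {Y : Finset ι} (hm : IsMerge P Q)
    (hf : Function.Injective fun i => P.part (f i)) (hA : redDegree G Q A ≤ t)
    (hu : ∀ y ∈ Y, u y ∈ A) (hadj : ∀ y i, G.Adj (u y) (f i) ↔ i ≤ y) :
    #Y ≤ 2 * (t + 1) + 1 := by
  rcases Y.eq_empty_or_nonempty with rfl | hY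
  · simp
  set Y' := Y.erase (Y.min' hY)
  have hsplit : ∀ i ∈ Y', ∃ a ∈ A, ∃ a' ∈ A, G.Adj a (f i) ∧ ¬ G.Adj a' (f i) := by
    intro i hi
    refine ⟨u i, hu i (mem_of_mem_erase hi), _, hu _ (Y.min'_mem hY), (hadj i i).2 le_rfl, ?_⟩
    rw [hadj, not_le]
    exact Y.min'_lt_of_mem_erase_min' hY hi
  have hfiber : ∀ B ∈ Y'.image fun i => Q.part (f i), #{i ∈ Y' | Q.part (f i) = B} ≤ 2 := by
    refine forall_mem_image.2 fun j _ => ?_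
    refine (card_le_card ?_).trans (hm.card_fiber_le_two hf (Q.part_mem.2 (mem_univ (f j))) Y')
    intro i hi
    rw [mem_filter, ← (mem_filter.1 hi).2]
    exact ⟨(mem_filter.1 hi).1, Q.mem_part (mem_univ _)⟩
  calc #Y = #Y' + 1 := (card_erase_add_one (Y.min'_mem hY)).symm
    _ ≤ 2 * #(Y'.image fun i => Q.part (f i)) + 1 := by
        gcongr
        exact card_le_mul_card_image _ _ hfiber
    _ ≤ 2 * (t + 1) + 1 := by
        gcongr
        exact card_image_part_le hA hsplit

variable [Fintype ι] {w : ι → ι → V} {f g : ι → V}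

lemma MergeStep.injective_part (hcard : (t + 1) * (2 * (t + 1) + 1) < Fintype.card ι)
    (hf : ∀ x y i, G.Adj (w x y) (f i) ↔ i ≤ x) (hg : ∀ x y i, G.Adj (w x y) (g i) ↔ i ≤ y)
    (hstep : MergeStep G t P Q) (hP : Function.Injective fun i => P.part (g i)) :
    Function.Injective fun i => Q.part (f i) := by
  refine .of_lt_imp_ne fun x x' hlt heq => ?_
  have hrow : #(univ.image fun y => Q.part (w x y)) ≤ t + 1 := by
    refine card_image_part_le (hstep.2 _ (Q.part_mem.2 (mem_univ (f x)))) fun y _ =>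
      ⟨f x, Q.mem_part (mem_univ _), f x', ?_, ?_, ?_⟩
    · rw [heq]
      exact Q.mem_part (mem_univ _)
    · rw [G.adj_comm, hf]
    · rwa [G.adj_comm, hf, not_le]
  obtain ⟨A, hA, hlarge⟩ := exists_lt_card_fiber_of_mul_lt_card_of_maps_to
    (fun y _ => mem_image_of_mem (fun y => Q.part (w x y)) (mem_univ y))
    ((Nat.mul_le_mul_right (2 * (t + 1) + 1) hrow).trans_lt hcard)
  obtain ⟨y₀, -, rfl⟩ := mem_image.1 hA
  refine hlarge.not_ge (hstep.1.card_le_of_half_graph hP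
    (hstep.2 _ (Q.part_mem.2 (mem_univ (w x y₀)))) (fun y hy => ?_) (hg x))
  rw [← (mem_filter.1 hy).2]
  exact Q.mem_part (mem_univ _)

-- In a contraction sequence, neither the `f i` nor the `g i` can be the first to lose injectivity.
theorem not_twinWidthLE_of_crossing_half_graphs
    (hcard : (t + 1) * (2 * (t + 1) + 1) < Fintype.card ι)
    (hf : ∀ x y i, G.Adj (w x y) (f i) ↔ i ≤ x) (hg : ∀ x y i, G.Adj (w x y) (g i) ↔ i ≤ y) :
    ¬ TwinWidthLE G t := by
  intro htw
  obtain ⟨P, Q, hP, hQ, hPQ⟩ := twinWidthLE_iff_reflTransGen.1 htw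
  have : Nontrivial ι := Fintype.one_lt_card_iff_nontrivial.1 (by nlinarith)
  obtain ⟨x₀, x₁, hne⟩ := exists_pair_ne ι
  have hPinj := part_injective_of_card_eq_one hP
  have hinj {R : Finpartition univ} (hPR : Relation.ReflTransGen (MergeStep G t) P R) :
      (Function.Injective fun i => R.part (f i)) ∧ Function.Injective fun i => R.part (g i) := by
    induction hPR with
    | refl =>
      exact ⟨hPinj.comp (injective_of_adj_iff_le fun i j => hf i x₀ j),
        hPinj.comp (injective_of_adj_iff_le fun i j => hg x₀ i j)⟩
    | tail _ hstep ih =>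
      exact ⟨hstep.injective_part hcard hf hg ih.2,
        hstep.injective_part hcard (fun y x => hg x y) (fun y x => hf x y) ih.1⟩
  have hpart (v : V) : Q.part v ∈ Q.parts := Q.part_mem.2 (mem_univ v)
  exact hne ((hinj hPQ).1 (card_le_one.1 hQ _ (hpart _) _ (hpart _)))

end LowerBound

section GridPerm

lemma exists_mem_iff_le_of_strictMono {V ι : Type*} [LinearOrder ι] [PredOrder ι] {N : ι → Set V}
    (hN : StrictMono N) (hne : ∀ i, (N i).Nonempty) : ∃ f : ι → V, ∀ i j, f i ∈ N j ↔ i ≤ j := by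
  suffices h : ∀ i, ∃ v, ∀ j, v ∈ N j ↔ i ≤ j by
    choose f hf using h
    exact ⟨f, hf⟩
  intro i
  by_cases hi : IsMin i
  · obtain ⟨v, hv⟩ := hne i
    exact ⟨v, fun j => iff_of_true (hN.monotone (hi.isBot j) hv) (hi.isBot j)⟩
  · obtain ⟨v, hv, hv'⟩ := Set.exists_of_ssubset (hN (Order.pred_lt_of_not_isMin hi))
    refine ⟨v, fun j => ⟨fun hj => ?_, fun hij => hN.monotone hij hv⟩⟩
    by_contra hlt
    exact hv' (hN.monotone (Order.le_pred_of_lt (not_le.1 hlt)) hj)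

/-- The permutation of the `k`-by-`k` grid, read row by row as `Fin (k * k)`, that transposes the
grid. -/
def gridPerm (k : ℕ) : Equiv.Perm (Fin (k * k)) :=
  finProdFinEquiv.symm.trans ((Equiv.prodComm _ _).trans finProdFinEquiv)

lemma gridPerm_finProdFinEquiv {k : ℕ} (x y : Fin k) :
    gridPerm k (finProdFinEquiv (x, y)) = finProdFinEquiv (y, x) := by
  simp [gridPerm]

lemma finProdFinEquiv_zero_le_iff {k : ℕ} [NeZero k] {i x y : Fin k} :
    finProdFinEquiv (i, 0) ≤ finProdFinEquiv (x, y) ↔ i ≤ x := by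
  simp only [Fin.le_def, finProdFinEquiv_apply_val, Fin.val_zero, zero_add]
  constructor
  · intro h
    by_contra! hlt
    nlinarith [y.isLt]
  · intro h
    nlinarith

theorem not_exposes_gridPerm {V : Type} [Fintype V] [DecidableEq V] {G : SimpleGraph V} {t k : ℕ}
    (hk : (t + 1) * (2 * (t + 1) + 1) < k) (htw : TwinWidthLE G t) :
    ¬ Exposes G (gridPerm k) := by
  rintro ⟨w, w₁, w₂, -, -, -, -, -, -, -, hne₁, hne₂, hmono₁, hmono₂⟩
  have : NeZero k := ⟨by lia⟩
  obtain ⟨f, hf⟩ := exists_mem_iff_le_of_strictMono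
    (N := fun i => G.neighborSet (w i) ∩ Set.range w₁) hmono₁ hne₁
  obtain ⟨g, hg⟩ := exists_mem_iff_le_of_strictMono
    (N := fun i => G.neighborSet (w (gridPerm k i)) ∩ Set.range w₂) hmono₂ fun i => hne₂ _
  have hf' (i j) : G.Adj (w j) (f i) ↔ i ≤ j := by
    rw [← hf]
    exact (and_iff_left ((hf i i).2 le_rfl).2).symm
  have hg' (i j) : G.Adj (w (gridPerm k j)) (g i) ↔ i ≤ j := by
    rw [← hg]
    exact (and_iff_left ((hg i i).2 le_rfl).2).symm
  refine not_twinWidthLE_of_crossing_half_graphs (w := fun x y => w (finProdFinEquiv (x, y)))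
    (f := fun i => f (finProdFinEquiv (i, 0))) (g := fun i => g (finProdFinEquiv (i, 0)))
    (by simpa) (fun x y i => ?_) (fun x y i => ?_) htw
  · rw [hf', finProdFinEquiv_zero_le_iff]
  · rw [← gridPerm_finProdFinEquiv, hg', finProdFinEquiv_zero_le_iff]

end GridPerm

/-! ### Exposing a permutation by two half-graphs -/

section Exposes

variable {V : Type} {G : SimpleGraph V} {p : ℕ} {π : Equiv.Perm (Fin p)}

lemma neighborSet_inter_range_strictMono {ι : Type*} [Preorder ι] {u f : ι → V}
    (h : ∀ i j, G.Adj (u i) (f j) ↔ j ≤ i) :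
    StrictMono fun i => G.neighborSet (u i) ∩ Set.range f := by
  refine fun i i' hlt => (Set.ssubset_iff_of_subset ?_).2 ⟨f i', ⟨(h i' i').2 le_rfl, i', rfl⟩, ?_⟩
  · rintro _ ⟨hadj, j, rfl⟩
    exact ⟨(h i' j).2 (((h i j).1 hadj).trans hlt.le), j, rfl⟩
  · exact fun hmem => hlt.not_ge ((h i i').1 hmem.1)

lemma exposes_of_half_graphs {w w₁ w₂ : Fin p → V}
    (hbij : Function.Bijective (Sum.elim w (Sum.elim w₁ w₂)))
    (h₁ : ∀ k i, G.Adj (w k) (w₁ i) ↔ i ≤ k) (h₂ : ∀ k i, G.Adj (w (π k)) (w₂ i) ↔ i ≤ k) :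
    Exposes G π := by
  have hinj := hbij.injective
  refine ⟨w, w₁, w₂, hinj.comp Sum.inl_injective,
    hinj.comp (Sum.inr_injective.comp Sum.inl_injective),
    hinj.comp (Sum.inr_injective.comp Sum.inr_injective), ?_, ?_, ?_, ?_, ?_, ?_,
    fun i j => neighborSet_inter_range_strictMono h₁ (a := i) (b := j),
    fun i j => neighborSet_inter_range_strictMono h₂ (a := i) (b := j)⟩
  · exact Set.disjoint_range_iff.2 fun x y => hinj.ne (a₁ := .inl x) (a₂ := .inr (.inl y)) nofun
  · exact Set.disjoint_range_iff.2 fun x y => hinj.ne (a₁ := .inl x) (a₂ := .inr (.inr y)) nofun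
  · exact Set.disjoint_range_iff.2 fun x y =>
      hinj.ne (a₁ := .inr (.inl x)) (a₂ := .inr (.inr y)) (by simp)
  · rw [Set.union_assoc, ← Set.Sum.elim_range, ← Set.Sum.elim_range, hbij.surjective.range_eq]
  · exact fun i => ⟨w₁ i, (h₁ i i).2 le_rfl, i, rfl⟩
  · intro i
    refine ⟨w₂ (π.symm i), ?_, π.symm i, rfl⟩
    simpa using (h₂ (π.symm i) (π.symm i)).2 le_rfl

lemma exists_exposes_of_half_graphs {n : ℕ} {G : SimpleGraph (Fin n)} {w w₁ w₂ : Fin p → Fin n}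
    (hw₁ : ∀ i j, w i ≠ w₁ j) (hw₂ : ∀ i j, w i ≠ w₂ j) (hw₁₂ : ∀ i j, w₁ i ≠ w₂ j)
    (h₁ : ∀ k i, G.Adj (w k) (w₁ i) ↔ i ≤ k) (h₂ : ∀ k i, G.Adj (w (π k)) (w₂ i) ↔ i ≤ k) :
    ∃ (m : ℕ) (H : SimpleGraph (Fin m)), IsInducedSubgraphOf H G ∧ Exposes H π := by
  have hw : Function.Injective w := injective_of_adj_iff_le (ι := (Fin p)ᵒᵈ) (u := w₁)
    fun i k => (G.adj_comm _ _).trans (h₁ k i)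
  have hinj : Function.Injective (Sum.elim w (Sum.elim w₁ w₂)) :=
    hw.sumElim ((injective_of_adj_iff_le h₁).sumElim (injective_of_adj_iff_le h₂) hw₁₂)
      fun i => Sum.rec (hw₁ i) (hw₂ i)
  let e : Fin (Fintype.card (Fin p ⊕ Fin p ⊕ Fin p)) ≃ (Fin p ⊕ Fin p ⊕ Fin p) :=
    (Fintype.equivFin _).symm
  refine ⟨_, G.comap (Sum.elim w (Sum.elim w₁ w₂) ∘ e),
    ⟨⟨_, hinj.comp e.injective⟩, fun u v => Iff.rfl⟩,
    exposes_of_half_graphs (w := e.symm ∘ Sum.inl) (w₁ := e.symm ∘ Sum.inr ∘ Sum.inl)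
      (w₂ := e.symm ∘ Sum.inr ∘ Sum.inr) ?_ (by simpa) (by simpa)⟩
  convert e.symm.bijective using 1
  ext (x | x | x) <;> simp

end Exposes

/-! ### Perturbed interval graphs -/

lemma exists_nat_endpoints {V α : Type*} [Finite V] [LinearOrder α] {l r : V → α}
    (hlr : ∀ v, l v ≤ r v) :
    ∃ a b : V → ℕ, (∀ u v, a u ≤ b v ↔ l u ≤ r v) ∧ Set.range a = Set.range b := by
  have := Fintype.ofFinite V
  let b (v : V) : ℕ := #{u | l u ≤ r v}
  have hfirst (v : V) : ∃ u, l v ≤ r u ∧ ∀ u', l v ≤ r u' → b u ≤ b u' := by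
    simpa using exists_min_image {u | l v ≤ r u} b ⟨v, by simpa using hlr v⟩
  choose f hf hfmin using hfirst
  have hiff (u v : V) : b (f u) ≤ b v ↔ l u ≤ r v := by
    refine ⟨fun hle => ?_, hfmin u v⟩
    by_contra! hlt
    refine hle.not_gt (card_lt_card ((ssubset_iff_of_subset ?_).2 ⟨u, ?_, ?_⟩))
    · exact monotone_filter_right _ fun x _ hx => hx.trans (hlt.le.trans (hf u))
    · simpa using hf u
    · simpa using hlt
  refine ⟨b ∘ f, b, hiff, (Set.range_comp_subset_range f b).antisymm ?_⟩
  rintro _ ⟨v, rfl⟩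
  obtain ⟨u, hu, hmax⟩ := exists_max_image ({u | l u ≤ r v} : Finset V) l ⟨v, by simpa using hlr v⟩
  refine ⟨u, ((hiff u v).2 (by simpa using hu)).antisymm (card_le_card ?_)⟩
  exact fun x hx => by simpa using (hmax x hx).trans (hf u)

section Rep

variable {V : Type}

lemma exists_coloring_of_foldl_elemPerturb {r : ℕ} (L : List (Set V)) (hL : L.length ≤ r)
    (G₀ : SimpleGraph V) : ∃ (c : V → Fin r → Bool) (F : (Fin r → Bool) → (Fin r → Bool) → Prop),
      ∀ u v, u ≠ v →
        ((L.foldl ElemPerturb G₀).Adj u v ↔ Xor (G₀.Adj u v) (F (c u) (c v))) := by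
  classical
  induction L generalizing r G₀ with
  | nil => exact ⟨fun _ _ => false, fun _ _ => False, fun u v _ => by simp [Xor]⟩
  | cons X L ih =>
    obtain ⟨r, rfl⟩ : ∃ r', r = r' + 1 := Nat.exists_eq_add_one.2 (Nat.zero_lt_of_lt hL)
    obtain ⟨c, F, hF⟩ := ih (Nat.le_of_succ_le_succ hL) (ElemPerturb G₀ X)
    refine ⟨fun v => Fin.cons (decide (v ∈ X)) (c v),
      fun x y => Xor (F (Fin.tail x) (Fin.tail y)) (x 0 = true ∧ y 0 = true), fun u v huv => ?_⟩
    have hX : (ElemPerturb G₀ X).Adj u v ↔ Xor (G₀.Adj u v) (u ∈ X ∧ v ∈ X) :=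
      ⟨And.right, And.intro huv⟩
    simp only [List.foldl_cons, hF u v huv, hX, Fin.tail_cons, Fin.cons_zero, decide_eq_true_eq]
    unfold Xor
    tauto

/-- The intervals `[a v, b v]` and the colouring `c` represent `G` as an interval graph whose
adjacencies have been complemented between the pairs of colours in `F`. Every bounded perturbation
of an interval graph is of this form, with boundedly many colours. -/
def IsFlippedIntervalRep {κ : Type*} (G : SimpleGraph V) (a b : V → ℕ) (c : V → κ)
    (F : κ → κ → Prop) : Prop :=
  ∀ u v, u ≠ v → (G.Adj u v ↔ Xor (a u ≤ b v ∧ a v ≤ b u) (F (c u) (c v)))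

lemma BoundedPerturbOf.exists_isFlippedIntervalRep {n r : ℕ} {G₀ G : SimpleGraph (Fin n)}
    (hG : BoundedPerturbOf r G₀ G) (hG₀ : IsIntervalGraph G₀) :
    ∃ (a b : Fin n → ℕ) (c : Fin n → Fin r → Bool) (F : (Fin r → Bool) → (Fin r → Bool) → Prop),
      (∀ v, a v ≤ b v) ∧ Set.range a = Set.range b ∧ IsFlippedIntervalRep G a b c F := by
  obtain ⟨l, r, hlr, hadj⟩ := hG₀
  obtain ⟨L, hL, rfl⟩ := hG
  obtain ⟨a, b, hab, hrange⟩ := exists_nat_endpoints hlr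
  obtain ⟨c, F, hF⟩ := exists_coloring_of_foldl_elemPerturb L hL G₀
  refine ⟨a, b, c, F, fun v => (hab v v).2 (hlr v), hrange, fun u v huv => ?_⟩
  have hmeet : G₀.Adj u v ↔ a u ≤ b v ∧ a v ≤ b u := by
    simp only [hadj u v huv, max_le_iff, le_min_iff, hab, hlr, true_and, and_true]
    exact and_comm
  rw [hF u v huv, hmeet]

end Rep

/-! ### Permutations exposed by a grid of intervals -/

section Thresholds

variable {p : ℕ}

lemma exists_strictMono_forall_or_forall_not (τ : Fin (2 * p) → Prop) :
    ∃ h : Fin p → Fin (2 * p), StrictMono h ∧ ((∀ i, τ (h i)) ∨ ∀ i, ¬ τ (h i)) := by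
  classical
  have hcard : #{i | τ i} + #{i | ¬ τ i} = 2 * p := by
    rw [card_filter_add_card_filter_not, card_univ, Fintype.card_fin]
  rcases le_or_gt p #{i | τ i} with hle | hlt
  · exact ⟨_, (orderEmbOfCardLe _ hle).strictMono,
      .inl fun i => (mem_filter.1 (orderEmbOfCardLe_mem _ hle i)).2⟩
  · have hle : p ≤ #{i | ¬ τ i} := by omega
    exact ⟨_, (orderEmbOfCardLe _ hle).strictMono,
      .inr fun i => (mem_filter.1 (orderEmbOfCardLe_mem _ hle i)).2⟩

lemma exists_xor_threshold_iff_le (τ : Fin (2 * p) → Prop) :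
    ∃ (h : Fin p → Fin (2 * p)) (m : Fin p → Fin (2 * p + 1)),
      ∀ k i, Xor (m k ≤ (h i).castSucc) (τ (h i)) ↔ i ≤ k := by
  obtain ⟨h, hmono, hτ | hτ⟩ := exists_strictMono_forall_or_forall_not τ
  · refine ⟨h, fun k => (h k).succ, fun k i => ?_⟩
    rw [Fin.succ_le_castSucc_iff, hmono.lt_iff_lt]
    simp [Xor, hτ]
  · refine ⟨h ∘ Fin.rev, fun k => (h k.rev).castSucc, fun k i => ?_⟩
    rw [Function.comp_apply, Fin.castSucc_le_castSucc_iff, hmono.le_iff_le, Fin.rev_le_rev]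
    simp [Xor, hτ]

end Thresholds

section Crossing

variable {V : Type*} {a b : V → ℕ} {x y q : ℕ}

/-- The intervals `[a v, b v]` of the vertices `W m m'` all contain `[x, y]`. Those of the vertices
`U s` lie to the left of `x`, those of the vertices `T s` to the right of `y`, and they meet
`W m m'` according to the thresholds `m` and `m'`. -/
structure IsCrossingFamily (a b : V → ℕ) (x y : ℕ) (W : Fin (q + 1) → Fin (q + 1) → V)
    (U T : Fin q → V) : Prop where
  left_le_right : x ≤ y
  lt_left : ∀ m m', a (W m m') < x
  right_lt : ∀ m m', y < b (W m m')
  lt_of_left : ∀ s, b (U s) < x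
  lt_of_right : ∀ s, y < a (T s)
  left_iff : ∀ m m' s, a (W m m') ≤ b (U s) ↔ m ≤ s.castSucc
  right_iff : ∀ m m' s, a (T s) ≤ b (W m m') ↔ s.castSucc < m'

lemma HasGrid.exists_isCrossingFamily {S : Finset V} (hab : ∀ v, a v ≤ b v)
    (hrange : Set.range a = Set.range b)
    (hS : HasGrid (S.image fun v => (a v, b v)) (2 * q + 2)) :
    ∃ (x y : ℕ) (W : Fin (q + 1) → Fin (q + 1) → V) (U T : Fin q → V),
      IsCrossingFamily a b x y W U T ∧ ∀ m m', W m m' ∈ S := by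
  obtain ⟨P, hP, hPS⟩ := hS
  choose v hvS hv using fun i j => mem_image.1 (hPS i j)
  have hva (i j) : a (v i j) = (P i j).1 := congr_arg Prod.fst (hv i j)
  have hvb (i j) : b (v i j) = (P i j).2 := congr_arg Prod.snd (hv i j)
  have hU (s : Fin q) : ∃ u, b u = a (v ⟨2 * s + 1, by omega⟩ 0) :=
    hrange.subset (Set.mem_range_self _)
  have hT (s : Fin q) : ∃ u, a u = b (v 0 ⟨2 * s + 2, by omega⟩) :=
    hrange.superset (Set.mem_range_self _)
  choose U hU using hU
  choose T hT using hT
  refine ⟨a (v (Fin.last _) 0), b (v (Fin.last _) 0),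
    fun m m' => v ⟨2 * m, by omega⟩ ⟨2 * m' + 1, by omega⟩, U, T,
    ⟨hab _, fun m m' => ?_, fun m m' => ?_, fun s => ?_, fun s => ?_, fun m m' s => ?_,
      fun m m' s => ?_⟩, fun m m' => hvS _ _⟩
  · rw [hva, hva]
    exact hP.1 _ _ _ _ (Fin.lt_def.2 (show 2 * (m : ℕ) < 2 * q + 1 by omega))
  · rw [hvb, hvb]
    exact hP.2 _ _ _ _ (Fin.lt_def.2 (by simp))
  · rw [hU, hva, hva]
    exact hP.1 _ _ _ _ (Fin.lt_def.2 (by simp))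
  · rw [hT, hvb, hvb]
    exact hP.2 _ _ _ _ (Fin.lt_def.2 (by simp))
  · rw [hU, hva, hva, hP.fst_le_fst_iff (by simp; omega), Fin.le_def, Fin.le_def]
    simp only [Fin.val_castSucc]
    omega
  · rw [hT, hvb, hvb, hP.snd_le_snd_iff (by simp; omega), Fin.le_def, Fin.lt_def]
    simp only [Fin.val_castSucc]
    omega

end Crossing

lemma IsFlippedIntervalRep.exists_exposes_of_hasGrid {κ : Type*} {n p : ℕ}
    {G : SimpleGraph (Fin n)} {a b : Fin n → ℕ} {c : Fin n → κ} {F : κ → κ → Prop}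
    {S : Finset (Fin n)} {c₀ : κ} (hrep : IsFlippedIntervalRep G a b c F) (hab : ∀ v, a v ≤ b v)
    (hrange : Set.range a = Set.range b) (hSc : ∀ v ∈ S, c v = c₀)
    (hS : HasGrid (S.image fun v => (a v, b v)) (4 * p + 2)) (π : Equiv.Perm (Fin p)) :
    ∃ (m : ℕ) (H : SimpleGraph (Fin m)), IsInducedSubgraphOf H G ∧ Exposes H π := by
  rw [show 4 * p + 2 = 2 * (2 * p) + 2 by ring] at hS
  obtain ⟨x, y, W, U, T, hfam, hWS⟩ := hS.exists_isCrossingFamily hab hrange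
  have hxy := hfam.left_le_right
  have hWU (m m' s) : W m m' ≠ U s := ne_of_apply_ne b
    (((hfam.lt_of_left s).trans_le hxy).trans (hfam.right_lt m m')).ne'
  have hWT (m m' s) : W m m' ≠ T s := ne_of_apply_ne a
    (((hfam.lt_left m m').trans_le hxy).trans (hfam.lt_of_right s)).ne
  have hUT (s s') : U s ≠ T s' := ne_of_apply_ne a
    ((hab _).trans_lt (((hfam.lt_of_left s).trans_le hxy).trans (hfam.lt_of_right s'))).ne
  have hadjU (m m' s) :
      G.Adj (W m m') (U s) ↔ Xor (m ≤ s.castSucc) (F c₀ (c (U s))) := by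
    have hmeet : a (U s) ≤ b (W m m') :=
      (hab _).trans (((hfam.lt_of_left s).trans_le hxy).trans (hfam.right_lt m m')).le
    rw [hrep _ _ (hWU m m' s), hSc _ (hWS m m'), hfam.left_iff, and_iff_left hmeet]
  have hadjT (m m' s) :
      G.Adj (W m m') (T s) ↔ Xor (m' ≤ s.castSucc) (¬ F c₀ (c (T s))) := by
    have hmeet : a (W m m') ≤ b (T s) :=
      (((hfam.lt_left m m').trans_le hxy).trans (hfam.lt_of_right s)).le.trans (hab _)
    rw [hrep _ _ (hWT m m' s), hSc _ (hWS m m'), hfam.right_iff, and_iff_right hmeet,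
      ← not_le, xor_not_left, xor_not_right]
  obtain ⟨h₁, m₁, hm₁⟩ := exists_xor_threshold_iff_le fun s => F c₀ (c (U s))
  obtain ⟨h₂, m₂, hm₂⟩ := exists_xor_threshold_iff_le fun s => ¬ F c₀ (c (T s))
  refine exists_exposes_of_half_graphs (w := fun k => W (m₁ k) (m₂ (π.symm k))) (w₁ := U ∘ h₁)
    (w₂ := T ∘ h₂) (fun _ _ => hWU _ _ _) (fun _ _ => hWT _ _ _)
    (fun _ _ => hUT _ _) (fun k i => (hadjU _ _ _).trans (hm₁ k i)) fun k i => ?_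
  rw [Function.comp_apply, hadjT, π.symm_apply_apply]
  exact hm₂ k i

/-! ### Fibre partitions -/

section FiberPartition

variable {V : Type} [Fintype V] [DecidableEq V] {G : SimpleGraph V} {d : ℕ}
  {P Q R : Finpartition (univ : Finset V)} {A B : Finset V}

lemma exists_isMerge (hA : A ∈ P.parts) (hB : B ∈ P.parts) (hAB : A ≠ B) :
    ∃ R : Finpartition (univ : Finset V), IsMerge P R ∧
      R.parts = insert (A ∪ B) ((P.parts.erase A).erase B) := by
  have hsubset : (P.parts.erase A).erase B ⊆ P.parts :=
    (erase_subset _ _).trans (erase_subset _ _)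
  have hBA : B ∈ P.parts.erase A := mem_erase.2 ⟨hAB.symm, hB⟩
  refine ⟨(P.ofSubset hsubset rfl).extend (b := A ∪ B)
    ((P.nonempty_of_mem_parts hA).mono subset_union_left).ne_empty ?_ ?_,
    ⟨A, hA, B, hB, hAB, rfl⟩, rfl⟩
  · exact (disjoint_union_left.2 ⟨P.supIndep hsubset hA (by simp),
      P.supIndep hsubset hB (by simp)⟩).symm
  · calc ((P.parts.erase A).erase B).sup id ⊔ (A ∪ B)
        = A ⊔ (B ⊔ ((P.parts.erase A).erase B).sup id) := by
          rw [sup_comm, ← sup_eq_union, sup_assoc]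
      _ = P.parts.sup id := by
          conv_rhs => rw [← insert_erase hA, ← insert_erase hBA, sup_insert, sup_insert, id, id]
      _ = univ := P.sup_parts

lemma exists_isMerge_of_lt (hPQ : P < Q) :
    ∃ R : Finpartition (univ : Finset V), IsMerge P R ∧ P < R ∧ R ≤ Q := by
  obtain ⟨C, hC, hCP⟩ : ∃ C ∈ Q.parts, ∀ A ∈ P.parts, ¬ C ≤ A := by
    simpa [LE.le] using hPQ.not_ge
  have hpart {x} (hx : x ∈ C) : P.part x ⊆ C := by
    obtain ⟨D, hD, hxD⟩ := hPQ.le (P.part_mem.2 (mem_univ x))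
    rwa [Q.eq_of_mem_parts hC hD hx (hxD (P.mem_part (mem_univ x)))]
  obtain ⟨x, hx⟩ := Q.nonempty_of_mem_parts hC
  have hPx := P.part_mem.2 (mem_univ x)
  obtain ⟨y, hy, hyx⟩ := not_subset.1 (hCP _ hPx)
  have hPy := P.part_mem.2 (mem_univ y)
  have hne : P.part x ≠ P.part y := fun heq => hyx (heq ▸ P.mem_part (mem_univ y))
  obtain ⟨R, hPR, hR⟩ := exists_isMerge hPx hPy hne
  refine ⟨R, hPR, lt_of_le_of_ne (fun D hD => ?_) ?_, fun D hD => ?_⟩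
  · by_cases hDx : D = P.part x
    · exact ⟨_, hR ▸ mem_insert_self _ _, hDx ▸ subset_union_left⟩
    by_cases hDy : D = P.part y
    · exact ⟨_, hR ▸ mem_insert_self _ _, hDy ▸ subset_union_right⟩
    · exact ⟨D, by simp [hR, hDx, hDy, hD], le_rfl⟩
  · rintro rfl
    have hmem : P.part x ∪ P.part y ∈ P.parts := hR ▸ mem_insert_self _ _
    refine hyx ((P.part_eq_of_mem hmem (mem_union_left _ (P.mem_part (mem_univ x)))).ge ?_)
    exact mem_union_right _ (P.mem_part (mem_univ y))
  · rw [hR, mem_insert, mem_erase, mem_erase] at hD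
    obtain rfl | ⟨-, -, hD⟩ := hD
    · exact ⟨C, hC, union_subset (hpart hx) (hpart hy)⟩
    · exact hPQ.le hD

lemma reflTransGen_mergeStep_of_le (hPQ : P ≤ Q)
    (hred : ∀ R, P ≤ R → R ≤ Q → ∀ A ∈ R.parts, redDegree G R A ≤ d) :
    Relation.ReflTransGen (MergeStep G d) P Q := by
  induction P using WellFoundedGT.induction with
  | _ P ih =>
    obtain rfl | hlt := hPQ.eq_or_lt
    · exact .refl
    obtain ⟨R, hPR, hlt, hRQ⟩ := exists_isMerge_of_lt hlt
    exact .head ⟨hPR, hred R hlt.le hRQ⟩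
      (ih R hlt hRQ fun S hRS => hred S (hlt.le.trans hRS))

variable {α β : Type*} {f : V → α} {φ : α → β} {u v : V}

/-- The partition of the vertices into the fibres of `f`, by which the stages of a contraction
sequence are described. -/
noncomputable def fiberPartition (f : V → α) : Finpartition (univ : Finset V) :=
  letI : DecidableRel (Setoid.ker f).r := Classical.decRel _
  Finpartition.ofSetoid (Setoid.ker f)

lemma mem_part_fiberPartition : v ∈ (fiberPartition f).part u ↔ f u = f v := by
  let _ : DecidableRel (Setoid.ker f).r := Classical.decRel _
  exact Finpartition.mem_part_ofSetoid_iff_rel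

lemma eq_of_le_fiberPartition (hR : R ≤ fiberPartition f) (hA : A ∈ R.parts) (hu : u ∈ A)
    (hv : v ∈ A) : f u = f v := by
  obtain ⟨B, hB, hAB⟩ := hR hA
  rw [← mem_part_fiberPartition, (fiberPartition f).part_eq_of_mem hB (hAB hu)]
  exact hAB hv

lemma mem_of_fiberPartition_le (hR : fiberPartition f ≤ R) (hA : A ∈ R.parts) (hu : u ∈ A)
    (huv : f u = f v) : v ∈ A := by
  obtain ⟨B, hB, hBA⟩ := hR ((fiberPartition f).part_mem.2 (mem_univ u))
  rw [R.eq_of_mem_parts hA hB hu (hBA (mem_part_fiberPartition.2 rfl))]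
  exact hBA (mem_part_fiberPartition.2 huv)

lemma fiberPartition_le_comp (f : V → α) (φ : α → β) :
    fiberPartition f ≤ fiberPartition (φ ∘ f) := by
  intro A hA
  obtain ⟨x, hx⟩ := (fiberPartition f).nonempty_of_mem_parts hA
  refine ⟨_, (fiberPartition (φ ∘ f)).part_mem.2 (mem_univ x), fun y hy => ?_⟩
  exact mem_part_fiberPartition.2 (congr_arg φ (eq_of_le_fiberPartition le_rfl hA hx hy))

/-- There are both an edge and a non-edge of `G` between the fibres of `f` over `i` and `j`, so that
these are joined by a red edge if `i ≠ j`. -/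
def IsMixed (G : SimpleGraph V) (f : V → α) (i j : α) : Prop :=
  ∃ u u' v v', f u = i ∧ f u' = i ∧ f v = j ∧ f v' = j ∧ G.Adj u v ∧ u' ≠ v' ∧ ¬ G.Adj u' v'

open Classical in
lemma exists_redDegree_le_card_isMixed [DecidableEq α] (hfR : fiberPartition f ≤ R)
    (hRφ : R ≤ fiberPartition (φ ∘ f)) (hA : A ∈ R.parts) :
    ∃ i, redDegree G R A ≤ #{x ∈ univ.image f | IsMixed G (φ ∘ f) i (φ x)} := by
  obtain ⟨u₀, hu₀⟩ := R.nonempty_of_mem_parts hA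
  refine ⟨φ (f u₀), card_le_card_of_forall_subsingleton (fun B x => ∃ v ∈ B, f v = x) ?_ ?_⟩
  · intro B hB
    obtain ⟨⟨hBA, hB⟩, hhom⟩ : (B ≠ A ∧ B ∈ R.parts) ∧ ¬ IsHomog G A B := by simpa using hB
    obtain ⟨⟨u', hu', v', hv', hnadj⟩, u, hu, v, hv, hadj⟩ :
        (∃ u ∈ A, ∃ v ∈ B, ¬ G.Adj u v) ∧ ∃ u ∈ A, ∃ v ∈ B, G.Adj u v := by
      simpa [IsHomog, not_or] using hhom
    have hφA {w} (hw : w ∈ A) := eq_of_le_fiberPartition hRφ hA hw hu₀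
    have hφB {w} (hw : w ∈ B) := eq_of_le_fiberPartition hRφ hB hw hv
    have hne : u' ≠ v' := fun heq => hBA (R.eq_of_mem_parts hB hA (heq ▸ hv') hu')
    exact ⟨f v, mem_filter.2 ⟨mem_image_of_mem f (mem_univ v), u, u', v, v', hφA hu, hφA hu', rfl,
      hφB hv', hadj, hne, hnadj⟩, v, hv, rfl⟩
  · rintro x - B ⟨hB, v, hv, rfl⟩ B' ⟨hB', v', hv', hvv'⟩
    have hBR : B ∈ R.parts := by simp_all
    have hBR' : B' ∈ R.parts := by simp_all
    exact R.eq_of_mem_parts hBR hBR' hv (mem_of_fiberPartition_le hfR hBR' hv' hvv')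

open Classical in
lemma reflTransGen_mergeStep_fiberPartition [DecidableEq α] [DecidableEq β] {m D : ℕ}
    (hmD : m * D ≤ d) (hφ : ∀ y, #{x ∈ univ.image f | φ x = y} ≤ m)
    (hD : ∀ i, #{y ∈ univ.image (φ ∘ f) | IsMixed G (φ ∘ f) i y} ≤ D) :
    Relation.ReflTransGen (MergeStep G d) (fiberPartition f) (fiberPartition (φ ∘ f)) := by
  refine reflTransGen_mergeStep_of_le (fiberPartition_le_comp f φ) fun R hfR hRφ A hA => ?_
  obtain ⟨i, hi⟩ := exists_redDegree_le_card_isMixed (G := G) hfR hRφ hA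
  refine hi.trans (le_trans ?_ ((Nat.mul_le_mul_left m (hD i)).trans hmD))
  refine card_le_mul_card_image_of_maps_to (f := φ) (fun x hx => ?_) m fun y _ => ?_
  · rw [mem_filter, mem_image] at hx
    obtain ⟨⟨v, -, rfl⟩, hmixed⟩ := hx
    exact mem_filter.2 ⟨mem_image_of_mem _ (mem_univ v), hmixed⟩
  · exact (card_le_card (filter_subset_filter _ (filter_subset _ _))).trans (hφ y)

end FiberPartition

/-! ### Contracting along divisions of the representation -/

lemma exists_add_succ_le {f : ℕ → ℕ} {M s : ℕ} (hs : 0 < s)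
    (hf : ∑ i ∈ range (s + 1), f i ≤ M * (s + 1)) : ∃ i < s, f i + f (i + 1) ≤ 4 * M := by
  have hsum : ∑ i ∈ range s, (f i + f (i + 1)) ≤ ∑ i ∈ range s, 4 * M := by
    rw [sum_const, card_range, smul_eq_mul, sum_add_distrib]
    have hhead := sum_range_succ f s
    have htail := sum_range_succ' f s
    nlinarith
  simpa using exists_le_of_sum_le (nonempty_range_iff.2 hs.ne') hsum

/-- The monotone map identifying `i` with `i + 1`, which merges two consecutive lines of a
division. -/
def collapse (i x : ℕ) : ℕ := if x ≤ i then x else x - 1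

lemma collapse_monotone (i : ℕ) : Monotone (collapse i) := by
  intro x y h
  unfold collapse
  split_ifs <;> omega

lemma eq_or_eq_succ_of_collapse_eq {i x z : ℕ} (h : collapse i x = z) : x = z ∨ x = z + 1 := by
  unfold collapse at h
  split_ifs at h <;> omega

lemma exists_eq_of_collapse_eq {i j : ℕ} (hj : j ≠ i) : ∃ j₀, ∀ x, collapse i x = j → x = j₀ := by
  refine ⟨if j ≤ i then j else j + 1, fun x h => ?_⟩
  unfold collapse at h
  split_ifs at h ⊢ <;> omega

lemma collapse_le {i s x : ℕ} (hi : i ≤ s) (hx : x ≤ s + 1) : collapse i x ≤ s := by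
  unfold collapse
  split_ifs <;> omega

lemma eq_and_not_subsingleton_of_not_le_iff_le {α β : Type*} [LinearOrder α] [LinearOrder β]
    {g : α → β} (hg : Monotone g) {x y x' y' : α} (hx : g x' = g x) (hy : g y' = g y)
    (hne : ¬ (x ≤ y ↔ x' ≤ y')) : g x = g y ∧ ¬ (g ⁻¹' {g x}).Subsingleton := by
  have heq : g x = g y := by
    by_contra hxy
    rcases lt_or_gt_of_ne hxy with hlt | hgt
    · exact hne (iff_of_true (hg.reflect_lt hlt).le (hg.reflect_lt (by rwa [hx, hy])).le)
    · exact hne (iff_of_false (hg.reflect_lt hgt).not_ge (hg.reflect_lt (by rwa [hx, hy])).not_ge)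
  refine ⟨heq, fun hsub => hne ?_⟩
  have h₁ : y = x := hsub heq.symm rfl
  have h₂ : x' = x := hsub hx rfl
  have h₃ : y' = x := hsub (hy.trans heq.symm) rfl
  rw [h₁, h₂, h₃]

section Division

variable {V : Type} {κ : Type*} {a b : V → ℕ} {c : V → κ} {g : ℕ → ℕ} {d i : ℕ}

/-- The cell of a vertex when the endpoints of the intervals are identified along `g`: the images
of its endpoints together with its colour. -/
def cell (a b : V → ℕ) (c : V → κ) (g : ℕ → ℕ) (v : V) : (ℕ × ℕ) × κ := ((g (a v), g (b v)), c v)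

lemma IsFlippedIntervalRep.not_subsingleton_of_isMixed {G : SimpleGraph V} {F : κ → κ → Prop}
    (hrep : IsFlippedIntervalRep G a b c F) (hg : Monotone g) {x y : (ℕ × ℕ) × κ}
    (hxy : IsMixed G (cell a b c g) x y) :
    (y.1.2 = x.1.1 ∧ ¬ (g ⁻¹' {x.1.1}).Subsingleton) ∨
      (y.1.1 = x.1.2 ∧ ¬ (g ⁻¹' {x.1.2}).Subsingleton) := by
  obtain ⟨u, u', v, v', rfl, hu', rfl, hv', hadj, hne, hnadj⟩ := hxy
  simp only [cell, Prod.mk.injEq] at hu' hv'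
  rw [hrep _ _ hadj.ne] at hadj
  rw [hrep _ _ hne, hu'.2, hv'.2] at hnadj
  have hchange : ¬ (a u ≤ b v ↔ a u' ≤ b v') ∨ ¬ (a v ≤ b u ↔ a v' ≤ b u') := by
    unfold Xor at hadj hnadj
    tauto
  refine hchange.imp (fun h => ?_) fun h => ?_
  · obtain ⟨heq, hsub⟩ := eq_and_not_subsingleton_of_not_le_iff_le hg hu'.1.1 hv'.1.2 h
    exact ⟨heq.symm, hsub⟩
  · obtain ⟨heq, hsub⟩ := eq_and_not_subsingleton_of_not_le_iff_le hg hv'.1.1 hu'.1.2 h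
    exact ⟨heq, show ¬ (g ⁻¹' {g (b u)}).Subsingleton from heq ▸ hsub⟩

variable [Fintype V] [DecidableEq κ]

/-- The nonempty cells of the division given by `g`, whose fibres are the parts of one stage of the
contraction sequence. -/
def cells (a b : V → ℕ) (c : V → κ) (g : ℕ → ℕ) : Finset ((ℕ × ℕ) × κ) := univ.image (cell a b c g)

/-- The nonempty cells in the row or column with index `i`. Both are taken together because left and
right endpoints are divided by the same map `g`. -/
def line (a b : V → ℕ) (c : V → κ) (g : ℕ → ℕ) (i : ℕ) : Finset ((ℕ × ℕ) × κ) :=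
  {x ∈ cells a b c g | x.1.1 = i ∨ x.1.2 = i}

lemma cell_mem_line {v : V} : cell a b c g v ∈ line a b c g i ↔ g (a v) = i ∨ g (b v) = i := by
  rw [line, mem_filter, cells, and_iff_right (mem_image_of_mem _ (mem_univ v))]
  rfl

/-- Every line of the division comes from at most one endpoint value or contains at most `d`
cells. This invariant bounds the red degrees in the contraction sequence. -/
def LinesLE (a b : V → ℕ) (c : V → κ) (d : ℕ) (g : ℕ → ℕ) : Prop :=
  ∀ i, (g ⁻¹' {i}).Subsingleton ∨ #(line a b c g i) ≤ d

lemma card_line_comp_le {φ : ℕ → ℕ} {S : Finset ℕ} (hS : ∀ x, φ x = i → x ∈ S) :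
    #(line a b c (φ ∘ g) i) ≤ ∑ x ∈ S, #(line a b c g x) := by
  have hsub : line a b c (φ ∘ g) i ⊆
      (S.biUnion fun x => line a b c g x).image (Prod.map (Prod.map φ φ) id) := by
    intro x hx
    obtain ⟨v, -, rfl⟩ := mem_image.1 (mem_of_mem_filter _ hx)
    obtain ⟨j, hj, hv⟩ : ∃ j ∈ S, cell a b c g v ∈ line a b c g j :=
      (cell_mem_line.1 hx).elim (fun h => ⟨_, hS _ h, cell_mem_line.2 (.inl rfl)⟩)
        fun h => ⟨_, hS _ h, cell_mem_line.2 (.inr rfl)⟩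
    exact mem_image.2 ⟨_, mem_biUnion.2 ⟨j, hj, hv⟩, rfl⟩
  exact (card_le_card hsub).trans (card_image_le.trans card_biUnion_le)

lemma LinesLE.collapse_comp (hg : LinesLE a b c d g)
    (hi : #(line a b c g i) + #(line a b c g (i + 1)) ≤ d) :
    LinesLE a b c d (collapse i ∘ g) := by
  intro j
  obtain rfl | hj := eq_or_ne j i
  · refine .inr ((card_line_comp_le (S := {j, j + 1}) fun x hx => ?_).trans ?_)
    · simpa using eq_or_eq_succ_of_collapse_eq hx
    · rwa [sum_pair j.succ_ne_self.symm]
  · obtain ⟨j₀, hj₀⟩ := exists_eq_of_collapse_eq hj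
    refine (hg j₀).imp (fun h => h.anti fun x hx => hj₀ _ hx) fun h => ?_
    refine (card_line_comp_le (S := {j₀}) fun x hx => ?_).trans (by rwa [sum_singleton])
    exact mem_singleton.2 (hj₀ x hx)

lemma sum_card_line_le (s : Finset ℕ) :
    ∑ i ∈ s, #(line a b c g i) ≤ 2 * #(cells a b c g) := by
  calc ∑ i ∈ s, #(line a b c g i)
      = ∑ x ∈ cells a b c g, #{i ∈ s | x.1.1 = i ∨ x.1.2 = i} :=
        sum_card_bipartiteAbove_eq_sum_card_bipartiteBelow (s := s) (t := cells a b c g)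
          (r := fun i (x : (ℕ × ℕ) × κ) => x.1.1 = i ∨ x.1.2 = i)
    _ ≤ ∑ x ∈ cells a b c g, #{x.1.1, x.1.2} := by
        refine sum_le_sum fun x _ => card_le_card fun i hi => ?_
        simpa [eq_comm] using (mem_filter.1 hi).2
    _ ≤ #(cells a b c g) * 2 := sum_le_card_nsmul _ _ 2 fun x _ => card_le_two
    _ = 2 * #(cells a b c g) := mul_comm _ _

open Classical in
lemma LinesLE.card_isMixed_le {G : SimpleGraph V} {F : κ → κ → Prop} (hlines : LinesLE a b c d g)
    (hrep : IsFlippedIntervalRep G a b c F) (hg : Monotone g) (x : (ℕ × ℕ) × κ) :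
    #{y ∈ cells a b c g | IsMixed G (cell a b c g) x y} ≤ 2 * d := by
  have hline (i) : #{_y ∈ line a b c g i | ¬ (g ⁻¹' {i}).Subsingleton} ≤ d := by
    by_cases hsub : (g ⁻¹' {i}).Subsingleton
    · simp [hsub]
    · exact (card_filter_le _ _).trans ((hlines i).resolve_left hsub)
  calc #{y ∈ cells a b c g | IsMixed G (cell a b c g) x y}
      ≤ #({_y ∈ line a b c g x.1.1 | ¬ (g ⁻¹' {x.1.1}).Subsingleton} ∪
          {_y ∈ line a b c g x.1.2 | ¬ (g ⁻¹' {x.1.2}).Subsingleton}) := by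
        refine card_le_card fun y hy => ?_
        obtain ⟨hy, hmixed⟩ := mem_filter.1 hy
        rw [mem_union, mem_filter, mem_filter]
        exact (hrep.not_subsingleton_of_isMixed hg hmixed).imp
          (fun h => ⟨mem_filter.2 ⟨hy, .inr h.1⟩, h.2⟩)
          fun h => ⟨mem_filter.2 ⟨hy, .inl h.1⟩, h.2⟩
    _ ≤ 2 * d := (card_union_le _ _).trans (by linarith [hline x.1.1, hline x.1.2])

lemma card_filter_map_collapse_le (S : Finset ((ℕ × ℕ) × κ)) (y : (ℕ × ℕ) × κ) :
    #{x ∈ S | Prod.map (Prod.map (collapse i) (collapse i)) id x = y} ≤ 4 := by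
  let T : Finset ((ℕ × ℕ) × κ) := ({y.1.1, y.1.1 + 1} ×ˢ {y.1.2, y.1.2 + 1}) ×ˢ {y.2}
  refine (card_le_card (t := T) fun x hx => ?_).trans ?_
  · obtain ⟨-, rfl⟩ := mem_filter.1 hx
    simp only [T, mem_product, mem_insert, mem_singleton]
    exact ⟨⟨eq_or_eq_succ_of_collapse_eq rfl, eq_or_eq_succ_of_collapse_eq rfl⟩, rfl⟩
  · simp [T, card_product]

variable [DecidableEq V] {G : SimpleGraph V} {F : κ → κ → Prop} {D t : ℕ}

open Classical in
lemma LinesLE.reflTransGen_collapse (hlines : LinesLE a b c d (collapse i ∘ g))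
    (hrep : IsFlippedIntervalRep G a b c F) (hg : Monotone g) (ht : 8 * d ≤ t) :
    Relation.ReflTransGen (MergeStep G t) (fiberPartition (cell a b c g))
      (fiberPartition (cell a b c (collapse i ∘ g))) := by
  refine reflTransGen_mergeStep_fiberPartition (f := cell a b c g)
    (φ := Prod.map (Prod.map (collapse i) (collapse i)) id) (m := 4) (D := 2 * d) (by omega)
    (fun y => ?_) fun x => ?_
  · exact card_filter_map_collapse_le _ y
  · exact hlines.card_isMixed_le hrep ((collapse_monotone i).comp hg) x

lemma reflTransGen_cell_zero (hrep : IsFlippedIntervalRep G a b c F)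
    (hD : ∀ (g : ℕ → ℕ) (s : ℕ), Monotone g → (∀ v, g (a v) ≤ s ∧ g (b v) ≤ s) →
      #(cells a b c g) ≤ D * (s + 1)) (ht : 8 * (8 * D) ≤ t) (s : ℕ) (hg : Monotone g)
    (hgs : ∀ v, g (a v) ≤ s ∧ g (b v) ≤ s) (hlines : LinesLE a b c (8 * D) g) :
    Relation.ReflTransGen (MergeStep G t) (fiberPartition (cell a b c g))
      (fiberPartition (cell a b c fun _ => 0)) := by
  induction s generalizing g with
  | zero =>
    have hzero : cell a b c g = cell a b c fun _ => 0 := by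
      funext v
      simp [cell, Nat.le_zero.1 (hgs v).1, Nat.le_zero.1 (hgs v).2]
    rw [hzero]
  | succ s ih =>
    have hsum : ∑ i ∈ range (s + 1 + 1), #(line a b c g i) ≤ 2 * D * (s + 1 + 1) :=
      (sum_card_line_le _).trans (by nlinarith [hD g (s + 1) hg hgs])
    obtain ⟨i, hi, hle⟩ := exists_add_succ_le s.succ_pos hsum
    have hlines' := hlines.collapse_comp (hle.trans (by omega))
    refine (hlines'.reflTransGen_collapse hrep hg ht).trans
      (ih ((collapse_monotone i).comp hg) (fun v => ?_) hlines')
    exact ⟨collapse_le (Nat.le_of_lt_succ hi) (hgs v).1,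
      collapse_le (Nat.le_of_lt_succ hi) (hgs v).2⟩

end Division

section TwinWidth

variable {V : Type} {κ : Type*} [Fintype V] [DecidableEq κ] [Fintype κ] {a b : V → ℕ} {c : V → κ}

lemma card_cells_zero_le : #(cells a b c fun _ => 0) ≤ Fintype.card κ := by
  refine (card_le_card (t := univ.image (Prod.mk (0, 0))) fun x hx => ?_).trans card_image_le
  obtain ⟨v, -, rfl⟩ := mem_image.1 hx
  exact mem_image_of_mem _ (mem_univ _)

lemma card_cells_le {g : ℕ → ℕ} {M : ℕ}
    (hM : ∀ c₀, #(({v | c v = c₀} : Finset V).image fun v => (g (a v), g (b v))) ≤ M) :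
    #(cells a b c g) ≤ M * Fintype.card κ := by
  refine card_le_mul_card_image_of_maps_to (f := Prod.snd) (t := univ) (fun _ _ => mem_univ _) M
    fun c₀ _ => (card_le_card fun x hx => ?_).trans
      ((card_image_le (f := fun y => (y, c₀))).trans (hM c₀))
  obtain ⟨hxc, rfl⟩ := mem_filter.1 hx
  obtain ⟨v, -, rfl⟩ := mem_image.1 hxc
  exact mem_image_of_mem _ (mem_image_of_mem _ (mem_filter.2 ⟨mem_univ v, rfl⟩))

variable [DecidableEq V] {G : SimpleGraph V} {F : κ → κ → Prop} {D : ℕ}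

theorem IsFlippedIntervalRep.twinWidthLE (hrep : IsFlippedIntervalRep G a b c F)
    (hD : ∀ (g : ℕ → ℕ) (s : ℕ), Monotone g → (∀ v, g (a v) ≤ s ∧ g (b v) ≤ s) →
      #(cells a b c g) ≤ D * (s + 1)) : TwinWidthLE G (8 * (8 * D) + Fintype.card κ) := by
  have hsingle (d) : LinesLE a b c d id := fun i => .inl fun x hx y hy => hx.trans hy.symm
  have hstart : Relation.ReflTransGen (MergeStep G (8 * (8 * D) + Fintype.card κ))
      (fiberPartition id) (fiberPartition (cell a b c id)) :=
    reflTransGen_mergeStep_fiberPartition (f := id) (φ := cell a b c id) (D := 2 * 0)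
      (Nat.zero_le _) (fun _ => card_le_univ _) ((hsingle 0).card_isMixed_le hrep monotone_id)
  have hmiddle : Relation.ReflTransGen (MergeStep G (8 * (8 * D) + Fintype.card κ))
      (fiberPartition (cell a b c id)) (fiberPartition (cell a b c fun _ => 0)) :=
    reflTransGen_cell_zero hrep hD (Nat.le_add_right _ _) (univ.sup a + univ.sup b)
      monotone_id (fun v => ⟨(le_sup (mem_univ v)).trans (Nat.le_add_right _ _),
        (le_sup (mem_univ v)).trans (Nat.le_add_left _ _)⟩) (hsingle _)
  have hend : Relation.ReflTransGen (MergeStep G (8 * (8 * D) + Fintype.card κ))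
      (fiberPartition (cell a b c fun _ => 0)) (fiberPartition fun _ => ()) :=
    reflTransGen_mergeStep_fiberPartition (f := cell a b c fun _ => 0) (φ := fun _ => ()) (D := 1)
      (by omega) (fun _ => (card_filter_le _ _).trans card_cells_zero_le) fun _ => card_le_univ _
  refine twinWidthLE_iff_reflTransGen.2
    ⟨_, _, fun A hA => ?_, ?_, (hstart.trans hmiddle).trans hend⟩
  · refine le_antisymm ?_ ((fiberPartition id).nonempty_of_mem_parts hA).card_pos
    exact card_le_one.2 fun u hu v hv => eq_of_le_fiberPartition (f := id) le_rfl hA hu hv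
  · refine card_le_one.2 fun A hA B hB => ?_
    obtain ⟨u, hu⟩ := (fiberPartition _).nonempty_of_mem_parts hA
    obtain ⟨v, hv⟩ := (fiberPartition _).nonempty_of_mem_parts hB
    exact (fiberPartition _).eq_of_mem_parts hA hB hu (mem_of_fiberPartition_le le_rfl hB hv rfl)

end TwinWidth

theorem exists_twinWidthLE_of_forall_not_exposes (r p : ℕ) : ∃ t, ∀ (n : ℕ)
    (G₀ G : SimpleGraph (Fin n)) (π : Equiv.Perm (Fin p)), IsIntervalGraph G₀ →
      BoundedPerturbOf r G₀ G →
      (∀ (m : ℕ) (H : SimpleGraph (Fin m)), IsInducedSubgraphOf H G → ¬ Exposes H π) →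
      TwinWidthLE G t := by
  obtain ⟨M, hM⟩ := marcus_tardos (4 * p + 2)
  refine ⟨8 * (8 * (M * Fintype.card (Fin r → Bool))) + Fintype.card (Fin r → Bool),
    fun n G₀ G π hG₀ hG hπ => ?_⟩
  obtain ⟨a, b, c, F, hab, hrange, hrep⟩ := hG.exists_isFlippedIntervalRep hG₀
  refine hrep.twinWidthLE fun g s hg hgs => ?_
  rw [mul_right_comm]
  refine card_cells_le fun c₀ => hM (s + 1) _ ?_ fun hgrid => ?_
  · exact forall_mem_image.2 fun v _ => ⟨Nat.lt_succ_of_le (hgs v).1, Nat.lt_succ_of_le (hgs v).2⟩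
  · have hgrid' : HasGrid (({v | c v = c₀} : Finset (Fin n)).image fun v => (a v, b v))
        (4 * p + 2) := by
      refine HasGrid.of_image_map hg hg ?_
      rwa [image_image]
    obtain ⟨m, H, hHG, hH⟩ := hrep.exists_exposes_of_hasGrid hab hrange
      (fun v hv => (mem_filter.1 hv).2) hgrid' π
    exact hπ m H hHG hH

/-- A hereditary class of `r`-bounded perturbations of interval graphs has
bounded twin-width iff for some permutation `π` it contains no graph
exposing `π`. -/
theorem stmt3 (r : ℕ) (C : ∀ n : ℕ, Set (SimpleGraph (Fin n)))
    (hher : Hereditary C)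
    (hpert : ∀ n : ℕ, ∀ G ∈ C n,
      ∃ G₀ : SimpleGraph (Fin n), IsIntervalGraph G₀ ∧ BoundedPerturbOf r G₀ G) :
    (∃ t : ℕ, ∀ n : ℕ, ∀ G ∈ C n, TwinWidthLE G t) ↔
      (∃ p : ℕ, 1 ≤ p ∧ ∃ π : Equiv.Perm (Fin p),
        ∀ n : ℕ, ∀ G ∈ C n, ¬ Exposes G π) := by
  constructor
  · rintro ⟨t, ht⟩
    let k := (t + 1) * (2 * (t + 1) + 1) + 1
    exact ⟨k * k, Nat.mul_pos (Nat.succ_pos _) (Nat.succ_pos _), gridPerm k, fun n G hG =>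
      not_exposes_gridPerm (Nat.lt_succ_self _) (ht n G hG)⟩
  · rintro ⟨p, -, π, hπ⟩
    obtain ⟨t, ht⟩ := exists_twinWidthLE_of_forall_not_exposes r p
    refine ⟨t, fun n G hG => ?_⟩
    obtain ⟨G₀, hG₀, hGG₀⟩ := hpert n G hG
    exact ht n G₀ G π hG₀ hGG₀ fun m H hHG => hπ m H (hher m n H G hG hHG)
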